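/- arXiv:2308.08462 — 2 statements merged into one kernel-verified Lean document; each statement's English description precedes it below -/
import Mathlib

section
/- Let ι be a finite index type, E : ι → ℝ, δ > 0, and let W be a complex matrix indexed by ι such that: (a) |E(i) − E(j)| ≥ δ whenever i ≠ j and W_{ij} ≠ 0; (b) for every i and all distinct j, j′ both different from i with W_{ij} ≠ 0 and W_{ij′} ≠ 0, one has |E(j) − E(j′)| ≥ δ. Define the matrix A by A_{ij} = W_{ij}/(E(i) − E(j)) if i ≠ j and E(i) ≠ E(j), and A_{ij} = 0 otherwise. Then ‖A‖ ≤ (π/√3)·‖W‖/δ; in particular ‖A‖ ≤ 2‖W‖/δ. -/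
/-- The ℓ² → ℓ² operator norm of a complex square matrix. -/
noncomputable def opNorm {ι : Type*} [Fintype ι] [DecidableEq ι] (A : Matrix ι ι ℂ) : ℝ :=
  ‖Matrix.toEuclideanCLM (𝕜 := ℂ) A‖

/-- Reals that are at least `1` and pairwise at distance at least `1` have inverse squares summing
to at most `ζ(2)`. -/
theorem sum_inv_sq_le_of_separated {ι : Type*} (s : Finset ι) (x : ι → ℝ)
    (hx : ∀ j ∈ s, 1 ≤ x j) (hsep : ∀ j ∈ s, ∀ k ∈ s, j ≠ k → 1 ≤ |x j - x k|) :
    ∑ j ∈ s, 1 / x j ^ 2 ≤ Real.pi ^ 2 / 6 := by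
  classical
  have hinj : Set.InjOn (fun j => ⌊x j⌋₊) s := by
    intro j hj k hk hjk
    by_contra hne
    have hfloor : ⌊x j⌋₊ = ⌊x k⌋₊ := hjk
    have hj_le := Nat.floor_le (zero_le_one.trans (hx j hj))
    have hk_le := Nat.floor_le (zero_le_one.trans (hx k hk))
    have hj_lt := Nat.lt_floor_add_one (x j)
    have hk_lt := Nat.lt_floor_add_one (x k)
    rw [hfloor] at hj_le hj_lt
    have : |x j - x k| < 1 := abs_lt.2 ⟨by linarith, by linarith⟩
    linarith [hsep j hj k hk hne]
  calc ∑ j ∈ s, 1 / x j ^ 2 ≤ ∑ j ∈ s, 1 / (⌊x j⌋₊ : ℝ) ^ 2 := by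
        refine Finset.sum_le_sum fun j hj => ?_
        have hpos : (0 : ℝ) < ⌊x j⌋₊ := by exact_mod_cast Nat.floor_pos.2 (hx j hj)
        have := Nat.floor_le (zero_le_one.trans (hx j hj))
        gcongr
    _ = ∑ n ∈ s.image fun j => ⌊x j⌋₊, 1 / (n : ℝ) ^ 2 :=
        (Finset.sum_image (f := fun n : ℕ => 1 / (n : ℝ) ^ 2) hinj).symm
    _ ≤ Real.pi ^ 2 / 6 :=
        sum_le_hasSum _ (fun n _ => by positivity) hasSum_zeta_two

/-- Reals of absolute value at least `δ` that are pairwise at distance at least `δ` have inverse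
squares summing to at most `2 ζ(2) / δ²`. -/
theorem sum_inv_sq_le_of_separated_of_abs {ι : Type*} (s : Finset ι) (x : ι → ℝ) {δ : ℝ}
    (hδ : 0 < δ) (hx : ∀ j ∈ s, δ ≤ |x j|)
    (hsep : ∀ j ∈ s, ∀ k ∈ s, j ≠ k → δ ≤ |x j - x k|) :
    ∑ j ∈ s, 1 / x j ^ 2 ≤ Real.pi ^ 2 / 3 / δ ^ 2 := by
  classical
  have hscale : ∀ j, 1 / x j ^ 2 = 1 / (x j / δ) ^ 2 / δ ^ 2 := fun j => by
    rw [div_pow, one_div_div, div_div_cancel_left' (by positivity), one_div]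
  have hdist : ∀ j ∈ s, ∀ k ∈ s, j ≠ k → 1 ≤ |x j / δ - x k / δ| := fun j hj k hk hne => by
    rw [← sub_div, abs_div, abs_of_pos hδ, one_le_div hδ]
    exact hsep j hj k hk hne
  have hpos : ∑ j ∈ s with 0 < x j, 1 / (x j / δ) ^ 2 ≤ Real.pi ^ 2 / 6 := by
    refine sum_inv_sq_le_of_separated _ _ (fun j hj => ?_) fun j hj k hk => ?_
    · rw [Finset.mem_filter] at hj
      rw [one_le_div hδ, ← abs_of_pos hj.2]
      exact hx j hj.1
    · exact hdist j (Finset.mem_filter.1 hj).1 k (Finset.mem_filter.1 hk).1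
  have hneg : ∑ j ∈ s with ¬ 0 < x j, 1 / (x j / δ) ^ 2 ≤ Real.pi ^ 2 / 6 := by
    have := sum_inv_sq_le_of_separated (s.filter fun j => ¬ 0 < x j) (fun j => -(x j / δ))
      (fun j hj => ?_) fun j hj k hk hne => ?_
    · simpa only [neg_sq] using this
    · rw [Finset.mem_filter, not_lt] at hj
      rw [← neg_div, one_le_div hδ, ← abs_of_nonpos hj.2]
      exact hx j hj.1
    · rw [neg_sub_neg, abs_sub_comm]
      exact hdist j (Finset.mem_filter.1 hj).1 k (Finset.mem_filter.1 hk).1 hne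
  simp_rw [hscale]
  rw [← Finset.sum_div, ← Finset.sum_filter_add_sum_filter_not s fun j => 0 < x j]
  gcongr
  linarith

/-- Each column of a matrix has Euclidean norm at most the operator norm. -/
theorem sum_norm_sq_col_le_opNorm_sq {ι : Type*} [Fintype ι] [DecidableEq ι]
    (W : Matrix ι ι ℂ) (j : ι) : ∑ i, ‖W i j‖ ^ 2 ≤ opNorm W ^ 2 := by
  have h := (Matrix.toEuclideanCLM (𝕜 := ℂ) W).le_opNorm (EuclideanSpace.single j 1)
  rw [PiLp.norm_single, norm_one, mul_one] at h
  have hsq := pow_le_pow_left₀ (norm_nonneg _) h 2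
  rw [EuclideanSpace.norm_sq_eq] at hsq
  simpa [opNorm, Matrix.ofLp_toEuclideanCLM] using hsq

/-- Schur-type bound: if `A i j = W i j * c i j` and the rows of `c` have square sums at most `K²`,
then `A` is bounded by `K` times `W`. -/
theorem opNorm_le_of_hadamard {ι : Type*} [Fintype ι] [DecidableEq ι]
    (W A c : Matrix ι ι ℂ) {K : ℝ} (hK : 0 ≤ K) (hA : ∀ i j, A i j = W i j * c i j)
    (hc : ∀ i, ∑ j, ‖c i j‖ ^ 2 ≤ K ^ 2) : opNorm A ≤ K * opNorm W := by
  have hW : 0 ≤ opNorm W := norm_nonneg _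
  refine ContinuousLinearMap.opNorm_le_bound _ (by positivity) fun u => ?_
  refine le_of_pow_le_pow_left₀ two_ne_zero (by positivity) ?_
  rw [EuclideanSpace.norm_sq_eq, mul_pow, EuclideanSpace.norm_sq_eq u]
  have hrow : ∀ i, ‖(Matrix.toEuclideanCLM (𝕜 := ℂ) A u) i‖ ^ 2 ≤
      K ^ 2 * ∑ j, ‖W i j‖ ^ 2 * ‖u j‖ ^ 2 := fun i => by
    have hnorm : ‖(Matrix.toEuclideanCLM (𝕜 := ℂ) A u) i‖ ≤ ∑ j, ‖c i j‖ * (‖W i j‖ * ‖u j‖) := by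
      rw [Matrix.ofLp_toEuclideanCLM]
      refine (norm_sum_le _ _).trans_eq (Finset.sum_congr rfl fun j _ => ?_)
      simp only [norm_mul, hA]
      ring
    calc _ ≤ (∑ j, ‖c i j‖ * (‖W i j‖ * ‖u j‖)) ^ 2 := by gcongr
      _ ≤ (∑ j, ‖c i j‖ ^ 2) * ∑ j, (‖W i j‖ * ‖u j‖) ^ 2 := Finset.sum_mul_sq_le_sq_mul_sq _ _ _
      _ ≤ K ^ 2 * ∑ j, (‖W i j‖ * ‖u j‖) ^ 2 := by gcongr; exact hc i
      _ = _ := by simp_rw [mul_pow]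
  calc _ ≤ ∑ i, K ^ 2 * ∑ j, ‖W i j‖ ^ 2 * ‖u j‖ ^ 2 := Finset.sum_le_sum fun i _ => hrow i
    _ = K ^ 2 * ∑ j, (∑ i, ‖W i j‖ ^ 2) * ‖u j‖ ^ 2 := by
        rw [← Finset.mul_sum, Finset.sum_comm]
        simp_rw [Finset.sum_mul]
    _ ≤ K ^ 2 * ∑ j, opNorm W ^ 2 * ‖u j‖ ^ 2 := by
        gcongr with j
        exact sum_norm_sq_col_le_opNorm_sq W j
    _ = (K * opNorm W) ^ 2 * ∑ j, ‖u j‖ ^ 2 := by rw [← Finset.mul_sum]; ring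

/-- Bound on the generator `A` with entries `W_{ij}/(E(i)−E(j))` under δ-separation of the
energies appearing in each row of `W`. -/
theorem generator_opNorm_le {ι : Type*} [Fintype ι] [DecidableEq ι]
    (E : ι → ℝ) (δ : ℝ) (hδ : 0 < δ) (W : Matrix ι ι ℂ)
    (ha : ∀ i j, i ≠ j → W i j ≠ 0 → δ ≤ |E i - E j|)
    (hb : ∀ i j j', j ≠ j' → j ≠ i → j' ≠ i → W i j ≠ 0 → W i j' ≠ 0 → δ ≤ |E j - E j'|)
    (A : Matrix ι ι ℂ)
    (hA : ∀ i j, A i j =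
      if i ≠ j ∧ E i ≠ E j then W i j / (((E i : ℝ) : ℂ) - ((E j : ℝ) : ℂ)) else 0) :
    opNorm A ≤ (Real.pi / Real.sqrt 3) * opNorm W / δ ∧ opNorm A ≤ 2 * opNorm W / δ := by
  classical
  have hW : 0 ≤ opNorm W := norm_nonneg _
  have hmain : opNorm A ≤ Real.pi / Real.sqrt 3 / δ * opNorm W := by
    refine opNorm_le_of_hadamard W A
      (fun i j => if j ≠ i ∧ W i j ≠ 0 then (((E i - E j : ℝ) : ℂ))⁻¹ else 0)
      (by positivity) (fun i j => ?_) fun i => ?_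
    · rw [hA]
      by_cases hij : i = j
      · simp [hij]
      by_cases hWij : W i j = 0
      · simp [hWij]
      have hE : E i ≠ E j := fun h => by
        have := ha i j hij hWij
        rw [h, sub_self, abs_zero] at this
        linarith
      simp [hij, Ne.symm hij, hWij, hE, div_eq_mul_inv]
    · have hsum := sum_inv_sq_le_of_separated_of_abs
        (Finset.univ.filter fun j => j ≠ i ∧ W i j ≠ 0) (fun j => E i - E j) hδ
        (fun j hj => ?_) fun j hj k hk hne => ?_
      · rw [div_pow, div_pow, Real.sq_sqrt (by norm_num)]
        refine le_of_eq_of_le ?_ hsum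
        rw [Finset.sum_filter]
        refine Finset.sum_congr rfl fun j _ => ?_
        split_ifs
        · rw [norm_inv, Complex.norm_real, Real.norm_eq_abs, inv_pow, sq_abs, one_div]
        · simp
      · obtain ⟨hji, hWij⟩ := (Finset.mem_filter.1 hj).2
        exact ha i j hji.symm hWij
      · obtain ⟨hji, hWij⟩ := (Finset.mem_filter.1 hj).2
        obtain ⟨hki, hWik⟩ := (Finset.mem_filter.1 hk).2
        rw [sub_sub_sub_cancel_left]
        exact hb i k j hne.symm hki hji hWik hWij
  have hconst : Real.pi / Real.sqrt 3 ≤ 2 := by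
    rw [div_le_iff₀ (by positivity)]
    refine le_of_pow_le_pow_left₀ two_ne_zero (by positivity) ?_
    rw [mul_pow, Real.sq_sqrt (by norm_num)]
    nlinarith [Real.pi_pos, Real.pi_lt_d2]
  have hfirst : opNorm A ≤ Real.pi / Real.sqrt 3 * opNorm W / δ :=
    hmain.trans_eq (div_mul_eq_mul_div _ _ _)
  exact ⟨hfirst, hfirst.trans (by gcongr)⟩
end

section
/- Let (T_α)_{α∈A} be a finite family of pairwise disjoint nonempty finite intervals in ℤ, let κ > 0 and i ∈ ℤ. Then Σ_α e^{−κ·dist(i,T_α)} ≤ 2/(1 − e^{−κ}). -/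
/-- The distance from a point `i ∈ ℤ` to a (nonempty) finite set `T ⊂ ℤ`. -/
noncomputable def distToSet (i : ℤ) (T : Finset ℤ) : ℝ :=
  sInf ((fun j : ℤ => |(i : ℝ) - (j : ℝ)|) '' ↑T)

/-- The distance to a nonempty finite set is attained. -/
lemma exists_mem_distToSet_eq_natAbs (i : ℤ) {T : Finset ℤ} (hT : T.Nonempty) :
    ∃ j ∈ T, distToSet i T = ((i - j).natAbs : ℝ) := by
  have hne : ((fun j : ℤ => |(i : ℝ) - (j : ℝ)|) '' (T : Set ℤ)).Nonempty :=
    (Finset.coe_nonempty.mpr hT).image _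
  obtain ⟨j, hj, h⟩ := hne.csInf_mem (T.finite_toSet.image _)
  refine ⟨j, hj, ?_⟩
  rw [distToSet, ← h, Nat.cast_natAbs]
  push_cast
  rfl

/-- A finite sum of distinct powers of `r ∈ [0, 1)` is bounded by the geometric series. -/
lemma sum_pow_le_of_injOn {A : Type*} {r : ℝ} (hr0 : 0 ≤ r) (hr1 : r < 1)
    (s : Finset A) (f : A → ℕ) (hf : Set.InjOn f s) :
    ∑ a ∈ s, r ^ f a ≤ (1 - r)⁻¹ := by
  rw [← Finset.sum_image (f := fun n => r ^ n) hf, ← tsum_geometric_of_lt_one hr0 hr1]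
  exact (summable_geometric_of_lt_one hr0 hr1).sum_le_tsum _ fun n _ => pow_nonneg hr0 n

/-- A finite sum of `r ^ |i - j|` over distinct integers `j` is at most twice the
geometric series. -/
lemma sum_pow_natAbs_sub_le {A : Type*} [Fintype A] {r : ℝ} (hr0 : 0 ≤ r) (hr1 : r < 1)
    (i : ℤ) (j : A → ℤ) (hj : Function.Injective j) :
    ∑ a, r ^ (i - j a).natAbs ≤ 2 / (1 - r) := by
  classical
  rw [← Finset.sum_filter_add_sum_filter_not Finset.univ (fun a => i ≤ j a), div_eq_mul_inv,
    two_mul]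
  refine add_le_add (sum_pow_le_of_injOn hr0 hr1 _ _ ?_) (sum_pow_le_of_injOn hr0 hr1 _ _ ?_)
  all_goals
    intro a ha b hb h
    simp only [Finset.coe_filter, Finset.mem_univ, true_and, Set.mem_ofPred_eq] at ha hb h
    exact hj (by omega)

/-- For a pairwise disjoint family of nonempty finite intervals in `ℤ`,
`Σ_α e^{−κ·dist(i,T_α)} ≤ 2/(1−e^{−κ})`. -/
theorem sum_exp_dist_le {A : Type*} [Fintype A] (T : A → Finset ℤ)
    (hne : ∀ α, (T α).Nonempty) (hint : ∀ α, ∃ a b : ℤ, T α = Finset.Icc a b)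
    (hdisj : ∀ α α', α ≠ α' → Disjoint (T α) (T α'))
    (κ : ℝ) (hκ : 0 < κ) (i : ℤ) :
    ∑ α, Real.exp (-κ * distToSet i (T α)) ≤ 2 / (1 - Real.exp (-κ)) := by
  choose j hjT hj using fun α => exists_mem_distToSet_eq_natAbs i (hne α)
  have hinj : Function.Injective j := fun a b hab => by
    by_contra hne'
    exact Finset.disjoint_left.mp (hdisj a b hne') (hjT a) (hab ▸ hjT b)
  have hexp (α : A) :
      Real.exp (-κ * distToSet i (T α)) = Real.exp (-κ) ^ (i - j α).natAbs := by
    rw [hj, mul_comm, Real.exp_nat_mul]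
  simp only [hexp]
  exact sum_pow_natAbs_sub_le (Real.exp_pos _).le (Real.exp_lt_one_iff.mpr (by linarith)) i j hinj
end
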